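/- Let C > 0 and let f : ℝ → ℝ be continuous on [0, 1], nonnegative on [0, 1], and differentiable on (0, 1) with derivative satisfying f'(t) ≤ C − f(t)²/C for all t ∈ (0, 1). Then for all t ∈ (0, 1], f(t) ≤ C + C/t. -/

import Mathlib

/-!
The function `√(ab) + b / (t - s)` is a strict supersolution of the Riccati equation
`y' = a - y² / b` that blows up as `t ↓ s`. A subsolution that is continuous up to `s` therefore
starts below it and can never cross it, whatever its initial value. A subsolution defined only for
`t > t₀` is compared in this way with the supersolutions blowing up at times `s > t₀`, and then
`s ↓ t₀`.
-/

open Filter Set Topology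

/-- The supersolution of the Riccati equation `y' = a - y² / b` that blows up at time `s`. For
`a = b = C` and `s = 0` it is the function `C + C / t`. Only times `t > s` are meaningful. -/
noncomputable def riccatiBarrier (a b s t : ℝ) : ℝ :=
  √(a * b) + b / (t - s)

section RiccatiComparison

variable {a b s t : ℝ} {f : ℝ → ℝ}

lemma hasDerivAt_riccatiBarrier (a b : ℝ) (hst : s < t) :
    HasDerivAt (riccatiBarrier a b s) (-b / (t - s) ^ 2) t := by
  have hsub : HasDerivAt (fun u ↦ u - s) 1 t := (hasDerivAt_id t).sub_const s
  have hdiv : HasDerivAt (fun u ↦ b / (u - s)) (-b / (t - s) ^ 2) t := by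
    simpa using (hasDerivAt_const t b).fun_div hsub (sub_pos.2 hst).ne'
  exact hdiv.const_add √(a * b)

lemma riccatiBarrier_strict_supersolution (ha : 0 < a) (hb : 0 < b) (hst : s < t) :
    a - riccatiBarrier a b s t ^ 2 / b < -b / (t - s) ^ 2 := by
  have hτ : 0 < t - s := sub_pos.2 hst
  have hsq : √(a * b) ^ 2 = a * b := Real.sq_sqrt (by positivity)
  calc a - riccatiBarrier a b s t ^ 2 / b
      = -b / (t - s) ^ 2 - 2 * √(a * b) / (t - s) := by
        unfold riccatiBarrier
        field_simp
        linear_combination -(t - s) ^ 2 * hsq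
    _ < -b / (t - s) ^ 2 := sub_lt_self _ (by positivity)

lemma tendsto_riccatiBarrier_nhdsGT (a : ℝ) (hb : 0 < b) (s : ℝ) :
    Tendsto (riccatiBarrier a b s) (𝓝[>] s) atTop := by
  have hsub : Tendsto (fun t ↦ t - s) (𝓝[>] s) (𝓝[>] 0) :=
    tendsto_nhdsWithin_iff.2
      ⟨((continuous_sub_right s).tendsto' s 0 (sub_self s)).mono_left nhdsWithin_le_nhds,
        eventually_mem_nhdsWithin.mono fun _ ht ↦ mem_Ioi.2 (sub_pos.2 ht)⟩
  exact tendsto_atTop_add_const_left _ _ (hsub.inv_tendsto_nhdsGT_zero.const_mul_atTop hb)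

lemma continuousAt_riccatiBarrier_left (a b : ℝ) (hst : s < t) :
    ContinuousAt (fun u ↦ riccatiBarrier a b u t) s := by
  unfold riccatiBarrier
  fun_prop (disch := exact (sub_pos.2 hst).ne')

lemma le_riccatiBarrier_of_le_left (ha : 0 < a) (hb : 0 < b) {d : ℝ} (hsd : s < d) (hdt : d ≤ t)
    (hcont : ContinuousOn f (Icc d t)) (hd : f d ≤ riccatiBarrier a b s d)
    (hslope : ∀ x ∈ Ico d t, ∀ r, a - f x ^ 2 / b < r → ∃ᶠ z in 𝓝[>] x, slope f x z < r) :
    f t ≤ riccatiBarrier a b s t := by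
  have hderiv : ∀ x ∈ Icc d t, HasDerivAt (riccatiBarrier a b s) (-b / (x - s) ^ 2) x :=
    fun x hx ↦ hasDerivAt_riccatiBarrier a b (hsd.trans_le hx.1)
  refine image_le_of_liminf_slope_right_lt_deriv_boundary' hcont hslope hd
    (fun x hx ↦ (hderiv x hx).continuousAt.continuousWithinAt)
    (fun x hx ↦ (hderiv x (Ico_subset_Icc_self hx)).hasDerivWithinAt)
    (fun x hx hfx ↦ ?_) (right_mem_Icc.2 hdt)
  rw [hfx]
  exact riccatiBarrier_strict_supersolution ha hb (hsd.trans_le hx.1)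

lemma le_riccatiBarrier_of_continuousOn_Icc (ha : 0 < a) (hb : 0 < b) (hst : s < t)
    (hcont : ContinuousOn f (Icc s t))
    (hslope : ∀ x ∈ Ioo s t, ∀ r, a - f x ^ 2 / b < r → ∃ᶠ z in 𝓝[>] x, slope f x z < r) :
    f t ≤ riccatiBarrier a b s t := by
  have hf : Tendsto f (𝓝[>] s) (𝓝 (f s)) := by
    simpa only [nhdsWithin_Ioo_eq_nhdsGT hst] using
      ((hcont s (left_mem_Icc.2 hst.le)).mono Ioo_subset_Icc_self).tendsto
  have hstart : ∀ᶠ d in 𝓝[>] s, f d ≤ riccatiBarrier a b s d := by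
    filter_upwards [hf.eventually_lt_const (lt_add_one (f s)),
      (tendsto_riccatiBarrier_nhdsGT a hb s).eventually_ge_atTop (f s + 1)] with d hfd hBd
    exact hfd.le.trans hBd
  obtain ⟨d, hd, hsd, hdt⟩ := (hstart.and (Ioo_mem_nhdsGT hst)).exists
  exact le_riccatiBarrier_of_le_left ha hb hsd hdt.le
    (hcont.mono (Icc_subset_Icc_left hsd.le)) hd
    fun x hx ↦ hslope x ⟨hsd.trans_le hx.1, hx.2⟩

end RiccatiComparison

/-- `hslope` bounds the lower right Dini derivative of `f`, so that `f` may be a spatial maximum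
such as `t ↦ max H(·, t)`, which need not be differentiable. -/
theorem ode_comparison_general {a b t₀ T : ℝ} (ha : 0 < a) (hb : 0 < b) {f : ℝ → ℝ}
    (hcont : ContinuousOn f (Ioc t₀ T))
    (hslope : ∀ x ∈ Ioo t₀ T, ∀ r, a - f x ^ 2 / b < r → ∃ᶠ z in 𝓝[>] x, slope f x z < r) :
    ∀ t ∈ Ioc t₀ T, f t ≤ √(a * b) + b / (t - t₀) := by
  rintro t ⟨ht₀, htT⟩
  have hbarrier : ∀ᶠ s in 𝓝[>] t₀, f t ≤ riccatiBarrier a b s t := by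
    filter_upwards [Ioo_mem_nhdsGT ht₀] with s ⟨hs, hst⟩
    exact le_riccatiBarrier_of_continuousOn_Icc ha hb hst
      (hcont.mono fun x hx ↦ ⟨hs.trans_le hx.1, hx.2.trans htT⟩)
      fun x hx ↦ hslope x ⟨hs.trans hx.1, hx.2.trans_le htT⟩
  exact ge_of_tendsto
    ((continuousAt_riccatiBarrier_left a b ht₀).tendsto.mono_left nhdsWithin_le_nhds) hbarrier

theorem ode_comparison (C : ℝ) (hC : 0 < C) (f : ℝ → ℝ)
    (hcont : ContinuousOn f (Set.Icc 0 1))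
    (hnonneg : ∀ t ∈ Set.Icc (0:ℝ) 1, 0 ≤ f t)
    (hdiff : ∀ t ∈ Set.Ioo (0:ℝ) 1, DifferentiableAt ℝ f t)
    (hderiv : ∀ t ∈ Set.Ioo (0:ℝ) 1, deriv f t ≤ C - (f t) ^ 2 / C) :
    ∀ t ∈ Set.Ioc (0:ℝ) 1, f t ≤ C + C / t := by
  simpa [hC.le] using ode_comparison_general hC hC (hcont.mono Ioc_subset_Icc_self)
    fun x hx r hr ↦ (hdiff x hx).hasDerivAt.hasDerivWithinAt.liminf_right_slope_le
      ((hderiv x hx).trans_lt hr)
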